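/- arXiv:math/0105255 — 6 statements merged into one kernel-verified Lean document; each statement's English description precedes it below -/
import Mathlib

section
/- Let A be an associative unital algebra over a commutative ring k, let a ∈ k be invertible, set δ = -a² - a⁻², and let P, Q ∈ A satisfy P² = δ·P, Q² = δ·Q, P Q P = P, and Q P Q = Q. Then (a·1 + a⁻¹·P)(a·1 + a⁻¹·Q)(a·1 + a⁻¹·P) = a³·1 + a·(P + Q) + a⁻¹·(P Q + Q P). -/
/-- With `a ∈ k` invertible, `δ = -a² - a⁻²`, and `P, Q` satisfying
the Temperley–Lieb relations `P² = δP`, `Q² = δQ`, `PQP = P`, `QPQ = Q`, one has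
`(a·1 + a⁻¹·P)(a·1 + a⁻¹·Q)(a·1 + a⁻¹·P) = a³·1 + a·(P + Q) + a⁻¹·(PQ + QP)`. -/
theorem triple_product_symmetric_form {k A : Type*} [CommRing k] [Ring A] [Algebra k A]
    (a : kˣ) (δ : k) (hδ : δ = -(a : k) ^ 2 - ((a⁻¹ : kˣ) : k) ^ 2)
    (P Q : A)
    (hP : P * P = δ • P) (hQ : Q * Q = δ • Q)
    (hPQP : P * Q * P = P) (hQPQ : Q * P * Q = Q) :
    ((a : k) • (1 : A) + ((a⁻¹ : kˣ) : k) • P) *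
      ((a : k) • (1 : A) + ((a⁻¹ : kˣ) : k) • Q) *
      ((a : k) • (1 : A) + ((a⁻¹ : kˣ) : k) • P) =
    ((a : k) ^ 3) • (1 : A) + (a : k) • (P + Q) + ((a⁻¹ : kˣ) : k) • (P * Q + Q * P) := by
  have hab : (a : k) * ((a⁻¹ : kˣ) : k) = 1 := a.mul_inv
  generalize ((a⁻¹ : kˣ) : k) = b at *
  generalize (a : k) = c at *
  have expand : (c • (1 : A) + b • P) * (c • (1 : A) + b • Q) * (c • (1 : A) + b • P) =
      (c ^ 3) • (1 : A) + (c ^ 2 * b) • (P + P + Q) + (c * b ^ 2) • (P * Q + Q * P + P * P)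
        + (b ^ 3) • (P * Q * P) := by
    simp only [add_mul, mul_add, smul_mul_assoc, mul_smul_comm, one_mul, mul_one, smul_add,
      smul_smul]
    module
  have h1 : c ^ 2 * b = c := by linear_combination c * hab
  have h2 : c * b ^ 2 = b := by linear_combination b * hab
  have h3 : c + c + b * δ + b ^ 3 = c := by
    rw [hδ]
    linear_combination (-c) * hab
  rw [expand, hPQP, hP, h1, h2]
  calc _ = (c ^ 3) • (1 : A) + (c + c + b * δ + b ^ 3) • P + c • Q + b • (P * Q + Q * P) := by
        module
    _ = _ := by
        rw [h3]
        module
end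

section
/- Let A be an associative unital algebra over a commutative ring k, let a ∈ k be invertible, set δ = -a² - a⁻², and let P, Q ∈ A satisfy P² = δ·P, Q² = δ·Q, P Q P = P, and Q P Q = Q. Then the elements ρ(σ) = a·1 + a⁻¹·P and ρ(τ) = a·1 + a⁻¹·Q satisfy the braid relation ρ(σ) ρ(τ) ρ(σ) = ρ(τ) ρ(σ) ρ(τ). -/
/-- With `a ∈ k` invertible, `δ = -a² - a⁻²`, and `P, Q` satisfying
the Temperley–Lieb relations, the elements `ρ(σ) = a·1 + a⁻¹·P` and
`ρ(τ) = a·1 + a⁻¹·Q` satisfy the braid relation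
`ρ(σ)ρ(τ)ρ(σ) = ρ(τ)ρ(σ)ρ(τ)`. -/
theorem temperley_lieb_braid_relation {k A : Type*} [CommRing k] [Ring A] [Algebra k A]
    (a : kˣ) (δ : k) (hδ : δ = -(a : k) ^ 2 - ((a⁻¹ : kˣ) : k) ^ 2)
    (P Q : A)
    (hP : P * P = δ • P) (hQ : Q * Q = δ • Q)
    (hPQP : P * Q * P = P) (hQPQ : Q * P * Q = Q)
    (ρσ ρτ : A)
    (hσ : ρσ = (a : k) • (1 : A) + ((a⁻¹ : kˣ) : k) • P)
    (hτ : ρτ = (a : k) • (1 : A) + ((a⁻¹ : kˣ) : k) • Q) :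
    ρσ * ρτ * ρσ = ρτ * ρσ * ρτ := by
  have hab : (a : k) * ((a⁻¹ : kˣ) : k) = 1 := a.mul_inv
  generalize ((a⁻¹ : kˣ) : k) = b at *
  generalize (a : k) = c at *
  have key : c * c * b + c * b * b * δ + b * b * b = 0 := by
    rw [hδ]
    linear_combination (-c * c * b - b * b * b) * hab
  have expand : ∀ X Y : A, X * X = δ • X → X * Y * X = X →
      (c • (1 : A) + b • X) * (c • (1 : A) + b • Y) * (c • (1 : A) + b • X)
        = (c * c * c) • (1 : A) + (c * c * b) • (X + Y) + (c * b * b) • (X * Y + Y * X)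
          + (c * c * b + c * b * b * δ + b * b * b) • X := by
    intro X Y hX hXYX
    simp only [add_mul, mul_add, smul_mul_assoc, mul_smul_comm, one_mul, mul_one, hX, hXYX]
    module
  rw [hσ, hτ, expand P Q hP hPQP, expand Q P hQ hQPQ, key, add_comm Q P,
    add_comm (Q * P) (P * Q), zero_smul, zero_smul]
end

section
/- Let A be a nonzero complex number, let M be the 2×2 complex matrix with rows (0, iA) and (-iA⁻¹, 0), and define the 4×4 matrices R and R̄ indexed by pairs (a,b), (c,d) ∈ {0,1}×{0,1} by R_{(a,b),(c,d)} = A·M_{ab}·M_{cd} + A⁻¹·δ_{ac}·δ_{bd} and R̄_{(a,b),(c,d)} = A⁻¹·M_{ab}·M_{cd} + A·δ_{ac}·δ_{bd}, where δ denotes the Kronecker delta. Then R·R̄ = I₄, the 4×4 identity matrix. -/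
open Matrix Complex

/-- With `M = [[0, iA],[-iA⁻¹, 0]]` (`A ≠ 0`), the bracket
R-matrices `R_{(a,b),(c,d)} = A·M_{ab}M_{cd} + A⁻¹·δ_{ac}δ_{bd}` and
`R̄_{(a,b),(c,d)} = A⁻¹·M_{ab}M_{cd} + A·δ_{ac}δ_{bd}` satisfy `R·R̄ = I`
(invariance under the second Reidemeister move). -/
theorem bracket_R_matrix_inverse (A : ℂ) (hA : A ≠ 0)
    (M : Matrix (Fin 2) (Fin 2) ℂ)
    (hM : M = !![0, I * A; -I * A⁻¹, 0])
    (R Rbar : Matrix (Fin 2 × Fin 2) (Fin 2 × Fin 2) ℂ)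
    (hR : ∀ p q : Fin 2 × Fin 2, R p q =
      A * M p.1 p.2 * M q.1 q.2 +
        A⁻¹ * (if p.1 = q.1 then 1 else 0) * (if p.2 = q.2 then 1 else 0))
    (hRbar : ∀ p q : Fin 2 × Fin 2, Rbar p q =
      A⁻¹ * M p.1 p.2 * M q.1 q.2 +
        A * (if p.1 = q.1 then 1 else 0) * (if p.2 = q.2 then 1 else 0)) :
    R * Rbar = 1 := by
  have hI : I ^ 2 = -1 := I_sq
  have hI3 : I ^ 3 = -I := by rw [pow_succ, hI]; ring
  have hI4 : I ^ 4 = 1 := I_pow_four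
  ext ⟨a, b⟩ ⟨c, d⟩
  rw [Matrix.mul_apply, Fintype.sum_prod_type]
  simp only [hR, hRbar, hM, Fin.sum_univ_two, Matrix.one_apply]
  fin_cases a <;> fin_cases b <;> fin_cases c <;> fin_cases d <;>
    simp [hA] <;> field_simp <;> ring_nf <;> simp only [hI, hI3, hI4] <;> ring
end

section
/- Let θ be a real number with |θ| ≤ π/6, set A = e^{iθ} and δ = -2cos(2θ); then δ² ≥ 1, so b = √(1 - δ⁻²) is real. With U₁ = δ·[[1,0],[0,0]] and U₂ = δ·[[δ⁻², δ⁻¹b],[δ⁻¹b, b²]], the matrices ρ(σ₁) = A·I + A⁻¹·U₁ and ρ(σ₂) = A·I + A⁻¹·U₂ are unitary 2×2 matrices satisfying the braid relation ρ(σ₁)ρ(σ₂)ρ(σ₁) = ρ(σ₂)ρ(σ₁)ρ(σ₂), and each ρ(σᵢ) is invertible with inverse A⁻¹·I + A·Uᵢ. Hence σ₁ ↦ ρ(σ₁), σ₂ ↦ ρ(σ₂) defines a unitary representation of the three-strand braid group B₃. -/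
open Matrix

lemma tl_inverse (A B d : ℂ) (X : Matrix (Fin 2) (Fin 2) ℂ) (h : A * B = 1)
    (hd : d = -A ^ 2 - B ^ 2) (hX : X * X = d • X) :
    (A • (1 : Matrix (Fin 2) (Fin 2) ℂ) + B • X) * (B • (1 : Matrix (Fin 2) (Fin 2) ℂ) + A • X)
      = 1 := by
  simp only [mul_add, add_mul, smul_mul_assoc, mul_smul_comm, one_mul, mul_one, hX, smul_smul]
  subst hd
  match_scalars
  · linear_combination h
  · linear_combination (-A ^ 2 - B ^ 2) * h

lemma tl_braid (A B d : ℂ) (X Y : Matrix (Fin 2) (Fin 2) ℂ) (h : A * B = 1)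
    (hd : d = -A ^ 2 - B ^ 2) (hX : X * X = d • X) (hY : Y * Y = d • Y)
    (hXY : X * Y * X = X) (hYX : Y * X * Y = Y) :
    (A • (1 : Matrix (Fin 2) (Fin 2) ℂ) + B • X) * (A • (1 : Matrix (Fin 2) (Fin 2) ℂ) + B • Y) *
      (A • (1 : Matrix (Fin 2) (Fin 2) ℂ) + B • X) =
    (A • (1 : Matrix (Fin 2) (Fin 2) ℂ) + B • Y) * (A • (1 : Matrix (Fin 2) (Fin 2) ℂ) + B • X) *
      (A • (1 : Matrix (Fin 2) (Fin 2) ℂ) + B • Y) := by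
  simp only [mul_add, add_mul, smul_mul_assoc, mul_smul_comm, one_mul, mul_one, hX, hY, hXY, hYX,
    smul_smul]
  subst hd
  match_scalars
  · ring
  · linear_combination (-B ^ 3 - A ^ 2 * B) * h
  · linear_combination (B ^ 3 + A ^ 2 * B) * h
  · ring
  · ring

/-- For `|θ| ≤ π/6`, `A = e^{iθ}`, `δ = -2cos(2θ)`, one has
`δ² ≥ 1` (so `b = √(1 - δ⁻²)` is real), and with `U₁ = δ·[[1,0],[0,0]]`,
`U₂ = δ·[[δ⁻², δ⁻¹b],[δ⁻¹b, b²]]`, the matrices `ρ(σᵢ) = A·I + A⁻¹·Uᵢ` are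
unitary, satisfy the braid relation `ρ(σ₁)ρ(σ₂)ρ(σ₁) = ρ(σ₂)ρ(σ₁)ρ(σ₂)`,
and each is invertible with inverse `A⁻¹·I + A·Uᵢ`.  Hence they define a
unitary representation of the three-strand braid group `B₃`. -/
theorem unitary_rep_three_strand_braid_group
    (θ : ℝ) (hθ : |θ| ≤ Real.pi / 6)
    (A : ℂ) (hA : A = Complex.exp (θ * Complex.I))
    (δ : ℝ) (hδ : δ = -2 * Real.cos (2 * θ))
    (b : ℝ) (hb : b = Real.sqrt (1 - δ⁻¹ ^ 2))
    (U₁ U₂ ρ₁ ρ₂ : Matrix (Fin 2) (Fin 2) ℂ)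
    (hU₁ : U₁ = (δ : ℂ) • !![1, 0; 0, 0])
    (hU₂ : U₂ = (δ : ℂ) • !![((δ⁻¹ : ℝ) : ℂ) ^ 2, ((δ⁻¹ : ℝ) : ℂ) * (b : ℂ);
                             ((δ⁻¹ : ℝ) : ℂ) * (b : ℂ), (b : ℂ) ^ 2])
    (hρ₁ : ρ₁ = A • (1 : Matrix (Fin 2) (Fin 2) ℂ) + A⁻¹ • U₁)
    (hρ₂ : ρ₂ = A • (1 : Matrix (Fin 2) (Fin 2) ℂ) + A⁻¹ • U₂) :
    1 ≤ δ ^ 2 ∧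
    ρ₁ * ρ₁ᴴ = 1 ∧ ρ₂ * ρ₂ᴴ = 1 ∧
    ρ₁ * ρ₂ * ρ₁ = ρ₂ * ρ₁ * ρ₂ ∧
    ρ₁ * (A⁻¹ • (1 : Matrix (Fin 2) (Fin 2) ℂ) + A • U₁) = 1 ∧
    (A⁻¹ • (1 : Matrix (Fin 2) (Fin 2) ℂ) + A • U₁) * ρ₁ = 1 ∧
    ρ₂ * (A⁻¹ • (1 : Matrix (Fin 2) (Fin 2) ℂ) + A • U₂) = 1 ∧
    (A⁻¹ • (1 : Matrix (Fin 2) (Fin 2) ℂ) + A • U₂) * ρ₂ = 1 := by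
  have hc : 1 / 2 ≤ Real.cos (2 * θ) := by
    rw [← Real.cos_pi_div_three, ← Real.cos_abs (2 * θ), abs_mul, abs_two]
    have := Real.pi_pos
    apply Real.cos_le_cos_of_nonneg_of_le_pi <;> first | positivity | linarith
  have h1 : 1 ≤ δ ^ 2 := by rw [hδ]; nlinarith
  have hne : δ ≠ 0 := by rintro rfl; norm_num at h1
  have hb2 : b ^ 2 = 1 - δ⁻¹ ^ 2 := by
    rw [hb, Real.sq_sqrt]
    rw [inv_pow, sub_nonneg]
    exact inv_le_one_of_one_le₀ h1
  have hb2c : (b : ℂ) ^ 2 = 1 - ((δ : ℂ)⁻¹) ^ 2 := by exact_mod_cast congrArg Complex.ofReal hb2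
  have hnec : (δ : ℂ) ≠ 0 := by exact_mod_cast hne
  have hA0 : A ≠ 0 := hA ▸ Complex.exp_ne_zero _
  have hAB : A * A⁻¹ = 1 := mul_inv_cancel₀ hA0
  have hBA : A⁻¹ * A = 1 := inv_mul_cancel₀ hA0
  have hd : (δ : ℂ) = -A ^ 2 - A⁻¹ ^ 2 := by
    rw [hδ, hA, ← Complex.exp_neg, ← Complex.exp_nat_mul, ← Complex.exp_nat_mul]
    push_cast
    rw [Complex.cos]
    ring_nf
  have hstar : star A = A⁻¹ := by
    rw [hA, ← Complex.exp_neg, Complex.star_def, ← Complex.exp_conj]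
    simp
  have hstar' : star A⁻¹ = A := by rw [← hstar, star_star]
  have hd' : (δ : ℂ) = -A⁻¹ ^ 2 - A ^ 2 := by rw [hd]; ring
  obtain ⟨e, he⟩ : ∃ e : ℂ, e = (δ : ℂ)⁻¹ := ⟨_, rfl⟩
  have hde : (δ : ℂ) * e = 1 := by rw [he]; exact mul_inv_cancel₀ hnec
  rw [Complex.ofReal_inv, ← he] at hU₂
  rw [← he] at hb2c
  have hX : U₁ * U₁ = (δ : ℂ) • U₁ := by
    rw [hU₁]; ext i j; fin_cases i <;> fin_cases j <;> simp [Matrix.mul_apply]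
  have hY : U₂ * U₂ = (δ : ℂ) • U₂ := by
    rw [hU₂]; ext i j
    fin_cases i <;> fin_cases j <;> simp [Matrix.mul_apply, Fin.sum_univ_two] <;> grind
  have hXY : U₁ * U₂ * U₁ = U₁ := by
    rw [hU₁, hU₂]; ext i j
    fin_cases i <;> fin_cases j <;> simp [Matrix.mul_apply, Fin.sum_univ_two] <;> grind
  have hYX : U₂ * U₁ * U₂ = U₂ := by
    rw [hU₁, hU₂]; ext i j
    fin_cases i <;> fin_cases j <;> simp [Matrix.mul_apply, Fin.sum_univ_two] <;> grind
  have hXs : U₁ᴴ = U₁ := by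
    rw [hU₁]; ext i j; fin_cases i <;> fin_cases j <;> simp
  have hYs : U₂ᴴ = U₂ := by
    rw [hU₂, he]; ext i j; fin_cases i <;> fin_cases j <;> simp
  have hs1 : ρ₁ᴴ = A⁻¹ • (1 : Matrix (Fin 2) (Fin 2) ℂ) + A • U₁ := by
    rw [hρ₁, conjTranspose_add, conjTranspose_smul, conjTranspose_smul, hXs, hstar, hstar',
      conjTranspose_one]
  have hs2 : ρ₂ᴴ = A⁻¹ • (1 : Matrix (Fin 2) (Fin 2) ℂ) + A • U₂ := by
    rw [hρ₂, conjTranspose_add, conjTranspose_smul, conjTranspose_smul, hYs, hstar, hstar',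
      conjTranspose_one]
  rw [hs1, hs2, hρ₁, hρ₂]
  exact ⟨h1, tl_inverse _ _ _ _ hAB hd hX, tl_inverse _ _ _ _ hAB hd hY,
    tl_braid _ _ _ _ _ hAB hd hX hY hXY hYX, tl_inverse _ _ _ _ hAB hd hX,
    tl_inverse _ _ _ _ hBA hd' hX, tl_inverse _ _ _ _ hAB hd hY, tl_inverse _ _ _ _ hBA hd' hY⟩
end

section
/- Let A be a nonzero complex number, set δ = -A² - A⁻², let n ≥ 2, let W₁, …, Wₙ be the standard basis column vectors of ℂⁿ, and for k = 1, …, n-1 define v_k = iA·W_k - iA⁻¹·W_{k+1} and U_k = v_k v_kᵗ (outer product using the plain transpose, without complex conjugation). Then: (1) U_k² = δ·U_k for all k; (2) U_k U_{k±1} U_k = U_k for all valid k; (3) U_k U_l = U_l U_k = 0 whenever |k - l| > 1. -/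
open Matrix

/-- With `A ≠ 0`, `δ = -A² - A⁻²`, standard basis vectors
`W₁, …, Wₙ` of `ℂⁿ`, `v_k = iA·W_k - iA⁻¹·W_{k+1}` and `U_k = v_k v_kᵗ`
(plain, unconjugated transpose), for `k = 1, …, n-1` (indexed here by
`Fin (n-1)`, zero-based): `U_k² = δ·U_k`, `U_k U_{k±1} U_k = U_k`, and
`U_k U_l = U_l U_k = 0` for `|k - l| > 1`.  These matrices represent the
Temperley–Lieb algebra `TLₙ`. -/
theorem burau_projectors_temperley_lieb (A : ℂ) (hA : A ≠ 0)
    (n : ℕ) (hn : 2 ≤ n)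
    (δ : ℂ) (hδ : δ = -A ^ 2 - A⁻¹ ^ 2)
    (v : Fin (n - 1) → Fin n → ℂ)
    (hv : ∀ (k : Fin (n - 1)) (j : Fin n), v k j =
      Complex.I * A * (if (j : ℕ) = (k : ℕ) then 1 else 0) -
        Complex.I * A⁻¹ * (if (j : ℕ) = (k : ℕ) + 1 then 1 else 0))
    (U : Fin (n - 1) → Matrix (Fin n) (Fin n) ℂ)
    (hU : ∀ k, U k = vecMulVec (v k) (v k)) :
    (∀ k, U k * U k = δ • U k) ∧
    (∀ k l : Fin (n - 1), Nat.dist (k : ℕ) (l : ℕ) = 1 → U k * U l * U k = U k) ∧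
    (∀ k l : Fin (n - 1), 1 < Nat.dist (k : ℕ) (l : ℕ) →
      U k * U l = 0 ∧ U l * U k = 0) := by
  have hdot : ∀ (k : Fin (n - 1)) (w : Fin n → ℂ), v k ⬝ᵥ w =
      Complex.I * A * w ⟨k, by omega⟩ - Complex.I * A⁻¹ * w ⟨k + 1, by omega⟩ := by
    intro k w
    have e1 : ∀ j : Fin n, ((j : ℕ) = (k : ℕ)) = (j = ⟨k, by omega⟩) := by
      intro j; simp [Fin.ext_iff]
    have e2 : ∀ j : Fin n, ((j : ℕ) = (k : ℕ) + 1) = (j = ⟨k + 1, by omega⟩) := by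
      intro j; simp [Fin.ext_iff]
    simp only [dotProduct, hv, e1, e2, sub_mul, Finset.sum_sub_distrib]
    simp
  have hmul : ∀ k l, U k * U l = (v k ⬝ᵥ v l) • vecMulVec (v k) (v l) := by
    intro k l
    rw [hU, hU]
    ext i j
    simp only [Matrix.mul_apply, vecMulVec_apply, Matrix.smul_apply, dotProduct, smul_eq_mul,
      Finset.sum_mul]
    exact Finset.sum_congr rfl fun x _ => by ring
  have hI : Complex.I * Complex.I = -1 := Complex.I_mul_I
  have hAA : A * A⁻¹ = 1 := mul_inv_cancel₀ hA
  have hself : ∀ k, v k ⬝ᵥ v k = δ := by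
    intro k
    rw [hdot, hv, hv, hδ]
    simp
    linear_combination (A ^ 2 + A⁻¹ ^ 2) * hI
  have hadj : ∀ k l : Fin (n - 1), (l : ℕ) = k + 1 → v k ⬝ᵥ v l = 1 := by
    intro k l h
    rw [hdot, hv, hv, h]
    have h2 : ¬ ((k : ℕ) = k + 1 + 1) := by omega
    simp [h2]
    linear_combination (-A * A⁻¹) * hI + hAA
  have hone : ∀ k l : Fin (n - 1), Nat.dist (k : ℕ) (l : ℕ) = 1 → v k ⬝ᵥ v l = 1 := by
    intro k l h
    have h' : (l : ℕ) = k + 1 ∨ (k : ℕ) = l + 1 := by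
      unfold Nat.dist at h; omega
    rcases h' with h' | h'
    · exact hadj k l h'
    · rw [dotProduct_comm]; exact hadj l k h'
  have hzero : ∀ k l : Fin (n - 1), 1 < Nat.dist (k : ℕ) (l : ℕ) → v k ⬝ᵥ v l = 0 := by
    intro k l h
    unfold Nat.dist at h
    rw [hdot, hv, hv, if_neg (by simp only; omega), if_neg (by simp only; omega),
      if_neg (by simp only; omega), if_neg (by simp only; omega)]
    simp
  refine ⟨fun k => ?_, fun k l h => ?_, fun k l h => ⟨?_, ?_⟩⟩
  · rw [hmul, hself, hU]
  · rw [hmul, hone k l h, one_smul, hU]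
    ext i j
    have := hone k l h
    rw [dotProduct_comm] at this
    simp only [Matrix.mul_apply, vecMulVec_apply]
    calc _ = v k i * (v l ⬝ᵥ v k) * v k j := by
          simp only [dotProduct, Finset.mul_sum, Finset.sum_mul]
          exact Finset.sum_congr rfl fun x _ => by ring
      _ = _ := by rw [this, mul_one]
  · rw [hmul, hzero k l h, zero_smul]
  · rw [hmul, dotProduct_comm, hzero k l h, zero_smul]
end

section
/- Let A be a nonzero complex number, set δ = -A² - A⁻², let W₁, …, Wₙ be the standard basis column vectors of ℂⁿ, and for k = 1, …, n-1 define v_k = iA·W_k - iA⁻¹·W_{k+1}, U_k = v_k v_kᵗ (plain transpose), and ρ(σ_k) = A·Iₙ + A⁻¹·U_k. Then: (1) each ρ(σ_k) is invertible with inverse A⁻¹·Iₙ + A·U_k; (2) ρ(σ_k)ρ(σ_{k+1})ρ(σ_k) = ρ(σ_{k+1})ρ(σ_k)ρ(σ_{k+1}) for k = 1, …, n-2; (3) ρ(σ_k)ρ(σ_l) = ρ(σ_l)ρ(σ_k) whenever |k - l| > 1. Hence the ρ(σ_k) satisfy the defining relations of the Artin braid group Bₙ. -/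
open Matrix

/-- With `A ≠ 0`, `δ = -A² - A⁻²`, standard basis vectors of `ℂⁿ`,
`v_k = iA·W_k - iA⁻¹·W_{k+1}`, `U_k = v_k v_kᵗ` (plain transpose), and
`ρ(σ_k) = A·Iₙ + A⁻¹·U_k`: (1) each `ρ(σ_k)` is invertible with inverse
`A⁻¹·Iₙ + A·U_k`; (2) `ρ(σ_k)ρ(σ_{k+1})ρ(σ_k) = ρ(σ_{k+1})ρ(σ_k)ρ(σ_{k+1})`;
(3) `ρ(σ_k)ρ(σ_l) = ρ(σ_l)ρ(σ_k)` for `|k - l| > 1`.  Hence the `ρ(σ_k)`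
satisfy the defining relations of the Artin braid group `Bₙ` (this is the
Burau-type representation). -/
theorem burau_type_braid_group_representation (A : ℂ) (hA : A ≠ 0)
    (n : ℕ) (hn : 2 ≤ n)
    (δ : ℂ) (hδ : δ = -A ^ 2 - A⁻¹ ^ 2)
    (v : Fin (n - 1) → Fin n → ℂ)
    (hv : ∀ (k : Fin (n - 1)) (j : Fin n), v k j =
      Complex.I * A * (if (j : ℕ) = (k : ℕ) then 1 else 0) -
        Complex.I * A⁻¹ * (if (j : ℕ) = (k : ℕ) + 1 then 1 else 0))
    (U : Fin (n - 1) → Matrix (Fin n) (Fin n) ℂ)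
    (hU : ∀ k, U k = vecMulVec (v k) (v k))
    (ρ : Fin (n - 1) → Matrix (Fin n) (Fin n) ℂ)
    (hρ : ∀ k, ρ k = A • (1 : Matrix (Fin n) (Fin n) ℂ) + A⁻¹ • U k) :
    (∀ k, ρ k * (A⁻¹ • (1 : Matrix (Fin n) (Fin n) ℂ) + A • U k) = 1 ∧
          (A⁻¹ • (1 : Matrix (Fin n) (Fin n) ℂ) + A • U k) * ρ k = 1) ∧
    (∀ k l : Fin (n - 1), (k : ℕ) + 1 = (l : ℕ) →
      ρ k * ρ l * ρ k = ρ l * ρ k * ρ l) ∧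
    (∀ k l : Fin (n - 1), 1 < Nat.dist (k : ℕ) (l : ℕ) →
      ρ k * ρ l = ρ l * ρ k) := by
  have hdot : ∀ (k : Fin (n - 1)) (w : Fin n → ℂ), v k ⬝ᵥ w =
      Complex.I * A * w ⟨k, by omega⟩ - Complex.I * A⁻¹ * w ⟨k + 1, by omega⟩ := by
    intro k w
    have h1 : ∀ j : Fin n, v k j * w j =
        (if j = (⟨k, by omega⟩ : Fin n) then Complex.I * A * w j else 0) -
        (if j = (⟨k + 1, by omega⟩ : Fin n) then Complex.I * A⁻¹ * w j else 0) := by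
      intro j
      rw [hv]
      simp only [Fin.ext_iff]
      split_ifs <;> ring
    simp only [dotProduct, h1, Finset.sum_sub_distrib, Finset.sum_ite_eq', Finset.sum_ite_eq,
      Finset.mem_univ, if_true]
  have hI : Complex.I ^ 2 = -1 := Complex.I_sq
  have hself : ∀ k, v k ⬝ᵥ v k = δ := by
    intro k
    rw [hdot, hv, hv, hδ]
    simp
    linear_combination (A ^ 2 + A⁻¹ ^ 2) * hI
  have hadj : ∀ k l : Fin (n - 1), (k : ℕ) + 1 = (l : ℕ) → v k ⬝ᵥ v l = 1 := by
    intro k l h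
    have h2 : (k : ℕ) ≠ l := by omega
    have h3 : (k : ℕ) ≠ l + 1 := by omega
    rw [hdot, hv, hv]
    simp [h, h2, h3]
    field_simp
    linear_combination -hI
  have hfar : ∀ k l : Fin (n - 1), 1 < Nat.dist (k : ℕ) (l : ℕ) → v k ⬝ᵥ v l = 0 := by
    intro k l h
    unfold Nat.dist at h
    have h1 : (k : ℕ) ≠ l := by omega
    have h2 : (k : ℕ) ≠ l + 1 := by omega
    have h3 : (k : ℕ) + 1 ≠ l := by omega
    rw [hdot, hv, hv]
    simp [h1, h2, h3]
  have hmul : ∀ k l, U k * U l = (v k ⬝ᵥ v l) • vecMulVec (v k) (v l) := by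
    intro k l
    rw [hU, hU, vecMulVec_mul_vecMulVec, vecMulVec_smul]
  have hsq : ∀ k, U k * U k = δ • U k := by
    intro k
    rw [hmul, hself, hU]
  have htri : ∀ k l, U k * U l * U k = ((v k ⬝ᵥ v l) * (v l ⬝ᵥ v k)) • U k := by
    intro k l
    rw [hmul, hU k, smul_mul_assoc, vecMulVec_mul_vecMulVec, vecMulVec_smul, smul_smul]
  refine ⟨fun k => ?_, fun k l h => ?_, fun k l h => ?_⟩
  · rw [hρ]
    constructor <;>
    · simp only [mul_add, add_mul, smul_mul_assoc, mul_smul_comm, one_mul, mul_one, hsq, hδ]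
      match_scalars <;> field_simp <;> ring
  · have e1 : U k * U l * U k = U k := by
      rw [htri, dotProduct_comm (v l), hadj k l h]; simp
    have e2 : U l * U k * U l = U l := by
      rw [htri, dotProduct_comm (v l), hadj k l h]; simp
    rw [hρ, hρ]
    simp only [mul_add, add_mul, smul_mul_assoc, mul_smul_comm, one_mul, mul_one, hsq, hδ, e1, e2]
    match_scalars <;> field_simp <;> ring
  · have e1 : U k * U l = 0 := by rw [hmul, hfar k l h, zero_smul]
    have e2 : U l * U k = 0 := by rw [hmul, dotProduct_comm, hfar k l h, zero_smul]
    rw [hρ, hρ]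
    simp only [mul_add, add_mul, smul_mul_assoc, mul_smul_comm, one_mul, mul_one, e1, e2]
    module
end
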